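/- Let n ≥ 1 be an integer, 0 < λ < n+1, 1 < p ≤ q < ∞, and let α, β ∈ ℝ satisfy α < 1/p', β < 1/q, α + β ≥ 0 and 1/q = 1/p − (n+1−(α+β+λ))/(n+1). Then there exists a constant C > 0 such that for every nonnegative measurable function f on ℝ^{n+1}_+, (∫_{ℝ^{n+1}_+} z^{−βq} (E_λ f(y,z))^q dy dz)^{1/q} ≤ C · (∫_{ℝ^{n+1}_+} t^{αp} f(x,t)^p dx dt)^{1/p}, with both sides interpreted in [0,∞]. -/

import Mathlib

open MeasureTheory ENNReal

noncomputable section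

/-- The upper half space `ℝ^{n+1}_+ = {(x,t) : t > 0}`. -/
def upperHalf (n : ℕ) : Set (EuclideanSpace ℝ (Fin n) × ℝ) := {X | 0 < X.2}

/-- The Euclidean distance `|(x,t)-(y,z)|` on `ℝ^n × ℝ`. -/
def hsDist {n : ℕ} (X Y : EuclideanSpace ℝ (Fin n) × ℝ) : ℝ :=
  Real.sqrt (‖X.1 - Y.1‖ ^ 2 + (X.2 - Y.2) ^ 2)

/-- The singular integral operator `E_λ f (Y) = ∫_{ℝ^{n+1}_+} f(X) |X-Y|^{-λ} dX`,
interpreted in `[0,∞]`. -/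
def Elam (n : ℕ) (lam : ℝ) (f : EuclideanSpace ℝ (Fin n) × ℝ → ℝ)
    (Y : EuclideanSpace ℝ (Fin n) × ℝ) : ℝ≥0∞ :=
  ∫⁻ X in upperHalf n, ENNReal.ofReal (f X) * ENNReal.ofReal (hsDist X Y) ^ (-lam)

/-!
Both weights are absorbed into the kernel `t^(-α) z^(-β) |X - Y|^(-lam)`, which has to define a
bounded operator from `L^p` to `L^q` of the half space.

If `α + β > 0`, with `u = 1 - 1/p`, `v = 1/q` and `ρ = u + v`, the kernel is the product of the
`v`-th and `u`-th powers of the kernels with exponents `((α - u)/ρ, (β + u)/ρ, lam/ρ)` and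
`((α + v)/ρ, (β - v)/ρ, lam/ρ)`. The balance condition makes the integral of the first in `Y` and of
the second in `X` scale invariant, and the strict bounds on `α`, `β` make them converge, so Schur's
test applies.

If `α + β = 0`, then `lam < n + 1` forces `p < q`. Where `|X - Y| < z/2` the weights cancel up to a
constant and the Hardy–Littlewood–Sobolev inequality applies; elsewhere `z ≤ 2 |X - Y|`, so a small
power of `|X - Y|` can be traded for one of `z`, which is the case `α + β > 0` again. The
Hardy–Littlewood–Sobolev inequality itself is obtained from a pointwise bound of Hedberg type.
-/

open scoped NNReal

theorem ennreal_rpow_neg_le_rpow_neg {a b : ℝ≥0∞} {s : ℝ} (hs : 0 ≤ s) (hab : a ≤ b) :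
    b ^ (-s) ≤ a ^ (-s) := by
  rw [ENNReal.rpow_neg, ENNReal.rpow_neg]
  exact ENNReal.inv_le_inv.2 (ENNReal.rpow_le_rpow hab hs)

section Radial

variable {V : Type*} [NormedAddCommGroup V] [NormedSpace ℝ V] [FiniteDimensional ℝ V]
  [MeasurableSpace V] [BorelSpace V] (μ : Measure V) [μ.IsAddHaarMeasure]

theorem lintegral_comp_enorm_sub {φ : ℝ≥0∞ → ℝ≥0∞} (hφ : Measurable φ) (x : V) {R : ℝ≥0∞}
    (hR0 : R ≠ 0) (hR : R ≠ ∞) :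
    ∫⁻ y, φ ‖x - y‖ₑ ∂μ = R ^ (Module.finrank ℝ V : ℝ) * ∫⁻ u, φ (R * ‖u‖ₑ) ∂μ := by
  lift R to ℝ≥0 using hR
  have hR0' : (R : ℝ) ≠ 0 := by exact_mod_cast hR0
  have hdilate (u : V) : (R : ℝ≥0∞) * ‖u‖ₑ = ‖(R : ℝ) • u‖ₑ := by simp [enorm_smul]
  simp only [hdilate]
  rw [lintegral_sub_left_eq_self (fun y ↦ φ ‖y‖ₑ) x,
    ← lintegral_map (f := fun u ↦ φ ‖u‖ₑ) (g := ((R : ℝ) • · : V → V)) (by fun_prop) (by fun_prop),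
    Measure.map_addHaar_smul μ hR0', lintegral_smul_measure, smul_eq_mul, ← mul_assoc]
  have hvolume : (R : ℝ≥0∞) ^ (Module.finrank ℝ V : ℝ) *
      ENNReal.ofReal |((R : ℝ) ^ Module.finrank ℝ V)⁻¹| = 1 := by
    have hpos : 0 < (R : ℝ) ^ Module.finrank ℝ V := by positivity
    rw [abs_of_pos (by positivity), ENNReal.ofReal_inv_of_pos hpos,
      ENNReal.ofReal_pow R.coe_nonneg, ENNReal.ofReal_coe_nnreal, ENNReal.rpow_natCast]
    exact ENNReal.mul_inv_cancel (by positivity) (by finiteness)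
  rw [hvolume, one_mul]

theorem lintegral_eball_zero_one_enorm_rpow_lt_top [Nontrivial V] {s : ℝ}
    (hs : s < Module.finrank ℝ V) : ∫⁻ u in Metric.eball 0 1, ‖u‖ₑ ^ (-s) ∂μ < ∞ := by
  have hradial : IntegrableOn (fun u : V ↦ (fun r : ℝ ↦ r ^ (-s)) ‖u‖) (Metric.ball 0 1) μ := by
    refine (integrableOn_fun_norm_addHaar μ (f := fun r : ℝ ↦ r ^ (-s))).2 ?_
    have hpow : IntegrableOn (fun r : ℝ ↦ r ^ ((Module.finrank ℝ V : ℝ) - 1 - s))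
        (Set.Ioo 0 1) := by
      rw [intervalIntegral.integrableOn_Ioo_rpow_iff zero_lt_one]
      linarith
    refine hpow.congr_fun (fun r hr ↦ ?_) measurableSet_Ioo
    dsimp only
    rw [smul_eq_mul, ← Real.rpow_natCast, ← Real.rpow_add hr.1, Nat.cast_sub Module.finrank_pos,
      Nat.cast_one, sub_eq_add_neg _ s]
  rw [← ENNReal.ofReal_one, Metric.eball_ofReal]
  refine (lintegral_congr_ae ?_).trans_lt hradial.lintegral_lt_top
  filter_upwards [ae_restrict_of_ae (Measure.ae_ne μ 0)] with u hu
  rw [← ofReal_norm, ENNReal.ofReal_rpow_of_pos (norm_pos_iff.2 hu)]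

theorem exists_lintegral_eball_enorm_sub_rpow_le [Nontrivial V] {s : ℝ}
    (hs : s < Module.finrank ℝ V) :
    ∃ C : ℝ≥0, ∀ (x : V) (R : ℝ≥0∞), R ≠ 0 → R ≠ ∞ →
      ∫⁻ y in Metric.eball x R, ‖x - y‖ₑ ^ (-s) ∂μ ≤ C * R ^ (Module.finrank ℝ V - s) := by
  have hfin := lintegral_eball_zero_one_enorm_rpow_lt_top μ hs
  refine ⟨(∫⁻ u in Metric.eball 0 1, ‖u‖ₑ ^ (-s) ∂μ).toNNReal, fun x R hR0 hR ↦ le_of_eq ?_⟩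
  have hφ : Measurable ((Set.Iio R).indicator (fun e : ℝ≥0∞ ↦ e ^ (-s))) :=
    Measurable.indicator (by fun_prop) measurableSet_Iio
  have hscaled (u : V) : (Set.Iio R).indicator (fun e : ℝ≥0∞ ↦ e ^ (-s)) (R * ‖u‖ₑ) =
      R ^ (-s) * (Metric.eball 0 1).indicator (fun u : V ↦ ‖u‖ₑ ^ (-s)) u := by
    have hmem : R * ‖u‖ₑ ∈ Set.Iio R ↔ u ∈ Metric.eball 0 1 := by
      simpa using ENNReal.mul_lt_mul_iff_right (b := ‖u‖ₑ) (c := 1) hR0 hR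
    by_cases hu : u ∈ Metric.eball 0 1
    · rw [Set.indicator_of_mem (hmem.2 hu), Set.indicator_of_mem hu,
        ENNReal.mul_rpow_of_ne_top hR (by finiteness)]
    · rw [Set.indicator_of_notMem (hmem.not.2 hu), Set.indicator_of_notMem hu, mul_zero]
  calc ∫⁻ y in Metric.eball x R, ‖x - y‖ₑ ^ (-s) ∂μ
      = ∫⁻ y, (Set.Iio R).indicator (fun e : ℝ≥0∞ ↦ e ^ (-s)) ‖x - y‖ₑ ∂μ := by
        rw [← lintegral_indicator Metric.isOpen_eball.measurableSet]
        refine lintegral_congr fun y ↦ ?_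
        simp only [Set.indicator, Metric.mem_eball', edist_eq_enorm_sub, Set.mem_Iio]
    _ = R ^ (Module.finrank ℝ V : ℝ) * (R ^ (-s) * ∫⁻ u in Metric.eball 0 1, ‖u‖ₑ ^ (-s) ∂μ) := by
        have hball : MeasurableSet (Metric.eball (0 : V) 1) := Metric.isOpen_eball.measurableSet
        rw [lintegral_comp_enorm_sub μ hφ x hR0 hR]
        simp only [hscaled]
        rw [lintegral_const_mul _ (Measurable.indicator (by fun_prop) hball),
          lintegral_indicator hball]
    _ = (∫⁻ u in Metric.eball 0 1, ‖u‖ₑ ^ (-s) ∂μ).toNNReal * R ^ (Module.finrank ℝ V - s) := by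
        rw [ENNReal.coe_toNNReal hfin.ne, sub_eq_add_neg, ENNReal.rpow_add _ _ hR0 hR]
        ring

theorem lintegral_max_enorm_one_rpow_lt_top {s : ℝ} (hs : Module.finrank ℝ V < s) :
    ∫⁻ u, max ‖u‖ₑ 1 ^ (-s) ∂μ < ∞ := by
  have hs0 : 0 ≤ s := (Nat.cast_nonneg _).trans hs.le
  have hfin : 2 ^ s * ∫⁻ u, ENNReal.ofReal ((1 + ‖u‖) ^ (-s)) ∂μ < ∞ :=
    ENNReal.mul_lt_top (by finiteness) (finite_integral_one_add_norm hs)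
  rw [← lintegral_const_mul' _ _ (by finiteness)] at hfin
  refine (lintegral_mono fun u ↦ ?_).trans_lt hfin
  have hsum : ENNReal.ofReal (1 + ‖u‖) ≤ 2 * max ‖u‖ₑ 1 := by
    rw [ENNReal.ofReal_add zero_le_one (norm_nonneg u), ENNReal.ofReal_one, ofReal_norm, two_mul]
    exact add_le_add (le_max_right _ _) (le_max_left _ _)
  calc max ‖u‖ₑ 1 ^ (-s) = 2 ^ s * (2 * max ‖u‖ₑ 1) ^ (-s) := by
        rw [ENNReal.mul_rpow_of_ne_top (by finiteness) (by finiteness), ← mul_assoc,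
          ← ENNReal.rpow_add _ _ (by norm_num) (by finiteness), add_neg_cancel, ENNReal.rpow_zero,
          one_mul]
    _ ≤ 2 ^ s * ENNReal.ofReal ((1 + ‖u‖) ^ (-s)) := by
        rw [← ENNReal.ofReal_rpow_of_pos (by positivity)]
        exact mul_le_mul_right (ennreal_rpow_neg_le_rpow_neg hs0 hsum) _

theorem exists_lintegral_max_enorm_sub_rpow_le {s : ℝ} (hs : Module.finrank ℝ V < s) :
    ∃ C : ℝ≥0, ∀ (x : V) (R : ℝ≥0∞), R ≠ 0 → R ≠ ∞ →
      ∫⁻ y, max ‖x - y‖ₑ R ^ (-s) ∂μ ≤ C * R ^ (Module.finrank ℝ V - s) := by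
  have hfin := lintegral_max_enorm_one_rpow_lt_top μ hs
  refine ⟨(∫⁻ u, max ‖u‖ₑ 1 ^ (-s) ∂μ).toNNReal, fun x R hR0 hR ↦ le_of_eq ?_⟩
  have hscaled (u : V) : max (R * ‖u‖ₑ) R ^ (-s) = R ^ (-s) * max ‖u‖ₑ 1 ^ (-s) := by
    rw [← ENNReal.mul_rpow_of_ne_top hR (by finiteness), mul_max, mul_one]
  rw [lintegral_comp_enorm_sub (φ := fun e ↦ max e R ^ (-s)) μ (by fun_prop) x hR0 hR]
  simp only [hscaled]
  rw [lintegral_const_mul' _ _ (by finiteness), ENNReal.coe_toNNReal hfin.ne, sub_eq_add_neg,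
    ENNReal.rpow_add _ _ hR0 hR]
  ring

theorem exists_lintegral_compl_eball_enorm_sub_rpow_le {s : ℝ} (hs : Module.finrank ℝ V < s) :
    ∃ C : ℝ≥0, ∀ (x : V) (R : ℝ≥0∞), R ≠ 0 → R ≠ ∞ →
      ∫⁻ y in (Metric.eball x R)ᶜ, ‖x - y‖ₑ ^ (-s) ∂μ ≤ C * R ^ (Module.finrank ℝ V - s) := by
  obtain ⟨C, hC⟩ := exists_lintegral_max_enorm_sub_rpow_le μ hs
  refine ⟨C, fun x R hR0 hR ↦ le_trans ?_ (hC x R hR0 hR)⟩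
  refine (setLIntegral_mono' Metric.isOpen_eball.measurableSet.compl fun y hy ↦ ?_).trans
    (setLIntegral_le_lintegral _ _)
  have hRy : R ≤ ‖x - y‖ₑ := by
    simpa only [Set.mem_compl_iff, Metric.mem_eball', edist_eq_enorm_sub, not_lt] using hy
  rw [max_eq_left hRy]

theorem exists_lintegral_eball_rpow_mul_enorm_sub_rpow_le [Nontrivial V] {a b : ℝ} (ha : 0 ≤ a)
    (hb : b < Module.finrank ℝ V) :
    ∃ C : ℝ≥0, ∀ (x : V) (R : ℝ≥0∞) (g : V → ℝ≥0∞), R ≠ 0 → R ≠ ∞ →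
      (∀ y ∈ Metric.eball x R, R ≤ g y) →
      ∫⁻ y in Metric.eball x R, g y ^ (-a) * ‖x - y‖ₑ ^ (-b) ∂μ ≤
        C * R ^ (Module.finrank ℝ V - (a + b)) := by
  obtain ⟨C, hC⟩ := exists_lintegral_eball_enorm_sub_rpow_le μ hb
  refine ⟨C, fun x R g hR0 hR hg ↦ ?_⟩
  calc ∫⁻ y in Metric.eball x R, g y ^ (-a) * ‖x - y‖ₑ ^ (-b) ∂μ
      ≤ ∫⁻ y in Metric.eball x R, R ^ (-a) * ‖x - y‖ₑ ^ (-b) ∂μ :=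
        setLIntegral_mono' Metric.isOpen_eball.measurableSet fun y hy ↦
          mul_le_mul_left (ennreal_rpow_neg_le_rpow_neg ha (hg y hy)) _
    _ ≤ R ^ (-a) * (C * R ^ (Module.finrank ℝ V - b)) := by
        rw [lintegral_const_mul _ (by fun_prop)]
        exact mul_le_mul_right (hC x R hR0 hR) _
    _ = C * R ^ (Module.finrank ℝ V - (a + b)) := by
        rw [mul_left_comm, ← ENNReal.rpow_add _ _ hR0 hR]
        ring_nf

theorem exists_lintegral_compl_union_eball_rpow_mul_rpow_le {a b : ℝ} (ha : 0 ≤ a) (hb : 0 ≤ b)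
    (hab : Module.finrank ℝ V < a + b) :
    ∃ C : ℝ≥0, ∀ (x x' : V) (R : ℝ≥0∞), R ≠ 0 → R ≠ ∞ →
      ∫⁻ y in (Metric.eball x R ∪ Metric.eball x' R)ᶜ, ‖x - y‖ₑ ^ (-a) * ‖x' - y‖ₑ ^ (-b) ∂μ ≤
        C * R ^ (Module.finrank ℝ V - (a + b)) := by
  obtain ⟨C, hC⟩ := exists_lintegral_compl_eball_enorm_sub_rpow_le μ hab
  refine ⟨C + C, fun x x' R hR0 hR ↦ ?_⟩
  have hpointwise (y : V) (hy : y ∈ (Metric.eball x R ∪ Metric.eball x' R)ᶜ) :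
      ‖x - y‖ₑ ^ (-a) * ‖x' - y‖ₑ ^ (-b) ≤
        ‖x - y‖ₑ ^ (-(a + b)) + ‖x' - y‖ₑ ^ (-(a + b)) := by
    have hadd {e : ℝ≥0∞} (he : R ≤ e) (he' : e ≠ ∞) : e ^ (-a) * e ^ (-b) = e ^ (-(a + b)) := by
      rw [neg_add, ENNReal.rpow_add _ _ (hR0.bot_lt.trans_le he).ne' he']
    rw [Set.compl_union, Set.mem_inter_iff, Set.mem_compl_iff, Set.mem_compl_iff,
      Metric.mem_eball', Metric.mem_eball', edist_eq_enorm_sub, edist_eq_enorm_sub,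
      not_lt, not_lt] at hy
    rcases le_total ‖x - y‖ₑ ‖x' - y‖ₑ with hle | hle
    · refine le_add_right ?_
      rw [← hadd hy.1 (by finiteness)]
      exact mul_le_mul_right (ennreal_rpow_neg_le_rpow_neg hb hle) _
    · refine le_add_left ?_
      rw [← hadd hy.2 (by finiteness)]
      exact mul_le_mul_left (ennreal_rpow_neg_le_rpow_neg ha hle) _
  refine (setLIntegral_mono (by fun_prop) hpointwise).trans ?_
  rw [lintegral_add_left (by fun_prop), ENNReal.coe_add, add_mul]
  refine add_le_add (le_trans (lintegral_mono_set ?_) (hC x R hR0 hR))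
    (le_trans (lintegral_mono_set ?_) (hC x' R hR0 hR))
  · exact Set.compl_subset_compl.2 Set.subset_union_left
  · exact Set.compl_subset_compl.2 Set.subset_union_right

theorem exists_lintegral_enorm_sub_rpow_mul_enorm_sub_rpow_le {a b : ℝ}
    (ha : a < Module.finrank ℝ V) (hb : b < Module.finrank ℝ V)
    (hab : Module.finrank ℝ V < a + b) :
    ∃ C : ℝ≥0, ∀ x x' : V, x ≠ x' →
      ∫⁻ y, ‖x - y‖ₑ ^ (-a) * ‖x' - y‖ₑ ^ (-b) ∂μ ≤
        C * ‖x - x'‖ₑ ^ (Module.finrank ℝ V - (a + b)) := by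
  have ha0 : 0 ≤ a := by linarith
  have hb0 : 0 ≤ b := by linarith
  have : Nontrivial V := Module.nontrivial_of_finrank_pos (R := ℝ) <| by
    exact_mod_cast ha0.trans_lt ha
  obtain ⟨Ca, hCa⟩ := exists_lintegral_eball_rpow_mul_enorm_sub_rpow_le μ hb0 ha
  obtain ⟨Cb, hCb⟩ := exists_lintegral_eball_rpow_mul_enorm_sub_rpow_le μ ha0 hb
  obtain ⟨Cf, hCf⟩ := exists_lintegral_compl_union_eball_rpow_mul_rpow_le μ ha0 hb0 hab
  refine ⟨(Ca + Cb + Cf) * 2⁻¹ ^ (Module.finrank ℝ V - (a + b)), fun x x' hx ↦ ?_⟩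
  set R := 2⁻¹ * ‖x - x'‖ₑ with hRdef
  have hR0 : R ≠ 0 := mul_ne_zero (by simp) (by simpa [sub_eq_zero] using hx)
  have hR : R ≠ ∞ := by finiteness
  have hballs {x x' : V} (hdist : edist x x' = R + R) (y : V) (hy : y ∈ Metric.eball x R) :
      R ≤ ‖x' - y‖ₑ := by
    rw [Metric.mem_eball'] at hy
    have htri := hdist ▸ edist_triangle_right x x' y
    rw [← edist_eq_enorm_sub]
    exact (ENNReal.add_le_add_iff_left hR).1 (htri.trans (add_le_add_left hy.le _))
  have hdist : edist x x' = R + R := by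
    rw [hRdef, ← add_mul, ENNReal.inv_two_add_inv_two, one_mul, edist_eq_enorm_sub]
  have hdist' : edist x' x = R + R := edist_comm x x' ▸ hdist
  have hC : (((Ca + Cb + Cf) * 2⁻¹ ^ (Module.finrank ℝ V - (a + b)) : ℝ≥0) : ℝ≥0∞) *
      ‖x - x'‖ₑ ^ (Module.finrank ℝ V - (a + b)) =
      (Ca + Cb + Cf) * R ^ (Module.finrank ℝ V - (a + b)) := by
    rw [ENNReal.mul_rpow_of_ne_top (by simp) (by finiteness), ENNReal.coe_mul,
      ENNReal.coe_rpow_of_ne_zero (by simp), ENNReal.coe_inv two_ne_zero]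
    push_cast
    ring
  rw [hC, ← lintegral_add_compl _ (Metric.isOpen_eball.union Metric.isOpen_eball).measurableSet,
    add_mul, add_mul]
  refine add_le_add ((lintegral_union_le _ _ _).trans (add_le_add ?_ ?_)) (hCf x x' R hR0 hR)
  · simpa only [mul_comm, add_comm b] using hCa x R _ hR0 hR (hballs hdist)
  · exact hCb x' R _ hR0 hR (hballs hdist')

end Radial

section Kernel

theorem lintegral_rpow_mul_rpow_mul_rpow_le {X : Type*} [MeasurableSpace X] {μ : Measure X}
    {f g h : X → ℝ≥0∞} (hf : AEMeasurable f μ) (hg : AEMeasurable g μ) (hh : AEMeasurable h μ)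
    {a b c : ℝ} (ha : 0 ≤ a) (hb : 0 ≤ b) (hc : 0 ≤ c) (habc : a + b + c = 1) :
    ∫⁻ x, f x ^ a * g x ^ b * h x ^ c ∂μ ≤
      (∫⁻ x, f x ∂μ) ^ a * (∫⁻ x, g x ∂μ) ^ b * (∫⁻ x, h x ∂μ) ^ c := by
  simpa [Fin.prod_univ_three] using
    ENNReal.lintegral_prod_norm_pow_le (μ := μ) Finset.univ (f := ![f, g, h]) (p := ![a, b, c])
      (by simp [Fin.forall_fin_succ, hf, hg, hh]) (by simpa [Fin.sum_univ_three])
      (by simp [Fin.forall_fin_succ, ha, hb, hc])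

variable {X Y : Type*} [MeasurableSpace X] [MeasurableSpace Y]
  {K K₁ K₂ : X → Y → ℝ≥0∞} {p q : ℝ} {μ : Measure X} {ν : Measure Y}

theorem lintegral_mul_schur_le (hp : 1 ≤ p) (hpq : p ≤ q) {f k₁ k₂ : X → ℝ≥0∞}
    (hf : Measurable f) (hk₁ : Measurable k₁) (hk₂ : Measurable k₂) :
    ∫⁻ x, f x * (k₁ x ^ (1 / q) * k₂ x ^ (1 - 1 / p)) ∂μ ≤
      (∫⁻ x, f x ^ p * k₁ x ∂μ) ^ (1 / q) * (∫⁻ x, k₂ x ∂μ) ^ (1 - 1 / p) *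
        (∫⁻ x, f x ^ p ∂μ) ^ (1 / p - 1 / q) := by
  have hp0 : 0 < p := by linarith
  have hv : 0 ≤ 1 / q := one_div_nonneg.2 (by linarith)
  have hu : 0 ≤ 1 - 1 / p := sub_nonneg.2 ((div_le_one hp0).2 hp)
  have hvu : 0 ≤ 1 / p - 1 / q := sub_nonneg.2 (one_div_le_one_div_of_le hp0 hpq)
  have hsplit (x : X) : f x * (k₁ x ^ (1 / q) * k₂ x ^ (1 - 1 / p)) =
      (f x ^ p * k₁ x) ^ (1 / q) * k₂ x ^ (1 - 1 / p) * (f x ^ p) ^ (1 / p - 1 / q) := by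
    have hf' : f x = (f x ^ p) ^ (1 / q) * (f x ^ p) ^ (1 / p - 1 / q) := by
      rw [← ENNReal.rpow_add_of_nonneg _ _ hv hvu, ← ENNReal.rpow_mul,
        add_sub_cancel, mul_one_div_cancel hp0.ne', ENNReal.rpow_one]
    rw [ENNReal.mul_rpow_of_nonneg _ _ hv]
    nth_rw 1 [hf']
    ring
  simp only [hsplit]
  exact lintegral_rpow_mul_rpow_mul_rpow_le (by fun_prop) (by fun_prop) (by fun_prop)
    hv hu hvu (by ring)

theorem lintegral_lintegral_mul_kernel_le [SFinite μ] [SFinite ν] {g : X → ℝ≥0∞}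
    (hg : Measurable g) (hm : Measurable (Function.uncurry K)) {C : ℝ≥0∞}
    (hK : ∀ᵐ x ∂μ, ∫⁻ y, K x y ∂ν ≤ C) :
    ∫⁻ y, ∫⁻ x, g x * K x y ∂μ ∂ν ≤ C * ∫⁻ x, g x ∂μ := by
  rw [lintegral_lintegral_swap (by fun_prop), ← lintegral_const_mul _ hg]
  refine lintegral_mono_ae ?_
  filter_upwards [hK] with x hx
  rw [lintegral_const_mul _ hm.of_uncurry_left, mul_comm]
  gcongr

theorem lintegral_mul_eq_zero_of_lintegral_rpow_eq_zero (hp : 0 < p) {f : X → ℝ≥0∞}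
    (hf : Measurable f) (hzero : ∫⁻ x, f x ^ p ∂μ = 0) (g : X → ℝ≥0∞) :
    ∫⁻ x, f x * g x ∂μ = 0 := by
  rw [lintegral_eq_zero_iff (by fun_prop)] at hzero
  refine lintegral_eq_zero_of_ae_eq_zero ?_
  filter_upwards [hzero] with x hx
  simp [(ENNReal.rpow_eq_zero_iff_of_pos hp).1 hx]

/-- `KernelBounded K p q μ ν` says that the positive integral operator `f ↦ ∫ f(x) K(x, ·) dμ(x)`
is bounded from `L^p(μ)` to `L^q(ν)`. Values are taken in `[0, ∞]`, so no integrability is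
presupposed. -/
def KernelBounded (K : X → Y → ℝ≥0∞) (p q : ℝ) (μ : Measure X) (ν : Measure Y) : Prop :=
  ∃ C : ℝ≥0, ∀ f : X → ℝ≥0∞, Measurable f →
    (∫⁻ y, (∫⁻ x, f x * K x y ∂μ) ^ q ∂ν) ^ (1 / q) ≤ C * (∫⁻ x, f x ^ p ∂μ) ^ (1 / p)

namespace KernelBounded

theorem mono (hK : KernelBounded K₂ p q μ ν) (hq : 0 ≤ q)
    (hle : ∀ᵐ y ∂ν, ∀ᵐ x ∂μ, K₁ x y ≤ K₂ x y) : KernelBounded K₁ p q μ ν := by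
  obtain ⟨C, hC⟩ := hK
  refine ⟨C, fun f hf ↦ le_trans ?_ (hC f hf)⟩
  refine ENNReal.rpow_le_rpow (lintegral_mono_ae ?_) (by positivity)
  filter_upwards [hle] with y hy
  refine ENNReal.rpow_le_rpow (lintegral_mono_ae ?_) hq
  filter_upwards [hy] with x hx
  gcongr

theorem const_mul (hK : KernelBounded K p q μ ν) (hq : 0 < q) {c : ℝ≥0∞} (hc : c ≠ ∞) :
    KernelBounded (fun x y ↦ c * K x y) p q μ ν := by
  obtain ⟨C, hC⟩ := hK
  lift c to ℝ≥0 using hc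
  refine ⟨c * C, fun f hf ↦ ?_⟩
  have hout : (∫⁻ y, (∫⁻ x, f x * (c * K x y) ∂μ) ^ q ∂ν) ^ (1 / q) =
      c * (∫⁻ y, (∫⁻ x, f x * K x y ∂μ) ^ q ∂ν) ^ (1 / q) := by
    simp only [mul_left_comm (f _), lintegral_const_mul' _ _ (coe_ne_top (r := c)),
      ENNReal.mul_rpow_of_nonneg _ _ hq.le]
    rw [lintegral_const_mul' _ _ (by finiteness), ENNReal.mul_rpow_of_nonneg _ _ (by positivity),
      ← ENNReal.rpow_mul, mul_one_div_cancel hq.ne', ENNReal.rpow_one]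
  rw [hout, ENNReal.coe_mul, mul_assoc]
  gcongr
  exact hC f hf

theorem add [SFinite μ] (hK₁ : KernelBounded K₁ p q μ ν) (hK₂ : KernelBounded K₂ p q μ ν)
    (hm₁ : Measurable (Function.uncurry K₁)) (hm₂ : Measurable (Function.uncurry K₂))
    (hq : 1 ≤ q) : KernelBounded (fun x y ↦ K₁ x y + K₂ x y) p q μ ν := by
  obtain ⟨C₁, hC₁⟩ := hK₁
  obtain ⟨C₂, hC₂⟩ := hK₂
  refine ⟨C₁ + C₂, fun f hf ↦ ?_⟩
  have hTm {K : X → Y → ℝ≥0∞} (hm : Measurable (Function.uncurry K)) :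
      Measurable fun y ↦ ∫⁻ x, f x * K x y ∂μ :=
    Measurable.lintegral_prod_left' (f := fun z : X × Y ↦ f z.1 * K z.1 z.2) (by fun_prop)
  have hsum (y : Y) : ∫⁻ x, f x * (K₁ x y + K₂ x y) ∂μ =
      ∫⁻ x, f x * K₁ x y ∂μ + ∫⁻ x, f x * K₂ x y ∂μ := by
    simp only [mul_add]
    exact lintegral_add_left (hf.mul hm₁.of_uncurry_right) _
  simp only [hsum]
  refine (ENNReal.lintegral_Lp_add_le (hTm hm₁).aemeasurable (hTm hm₂).aemeasurable hq).trans ?_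
  rw [ENNReal.coe_add, add_mul]
  exact add_le_add (hC₁ f hf) (hC₂ f hf)

theorem restrict (hK : KernelBounded K p q μ ν) (hp : 0 < p) (hq : 0 ≤ q) {s : Set X}
    (hs : MeasurableSet s) (t : Set Y) :
    KernelBounded K p q (μ.restrict s) (ν.restrict t) := by
  obtain ⟨C, hC⟩ := hK
  refine ⟨C, fun f hf ↦ ?_⟩
  have hT (y : Y) : ∫⁻ x in s, f x * K x y ∂μ = ∫⁻ x, s.indicator f x * K x y ∂μ := by
    simp only [← lintegral_indicator hs, Set.indicator_mul_left]
  have hnorm : ∫⁻ x in s, f x ^ p ∂μ = ∫⁻ x, s.indicator f x ^ p ∂μ := by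
    rw [← lintegral_indicator hs]
    refine lintegral_congr fun x ↦ ?_
    by_cases hx : x ∈ s <;> simp [hx, hp]
  simp only [hT, hnorm]
  refine le_trans ?_ (hC _ (hf.indicator hs))
  gcongr
  exact Measure.restrict_le_self

theorem of_normalized (hp : 0 < p) (hq : 0 < q)
    (h : ∃ C : ℝ≥0, ∀ f : X → ℝ≥0∞, Measurable f → ∫⁻ x, f x ^ p ∂μ = 1 →
      ∫⁻ y, (∫⁻ x, f x * K x y ∂μ) ^ q ∂ν ≤ C) : KernelBounded K p q μ ν := by
  obtain ⟨C, hC⟩ := h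
  refine ⟨C ^ (1 / q) + 1, fun f hf ↦ ?_⟩
  set M := (∫⁻ x, f x ^ p ∂μ) ^ (1 / p) with hM
  rcases eq_or_ne M ∞ with hMtop | hMtop
  · simp [hMtop, ENNReal.mul_top]
  rcases eq_or_ne M 0 with hM0 | hM0
  · rw [hM, ENNReal.rpow_eq_zero_iff_of_pos (by positivity)] at hM0
    simp [lintegral_mul_eq_zero_of_lintegral_rpow_eq_zero hp hf hM0, hq]
  have hnormalized : ∫⁻ x, (M⁻¹ * f x) ^ p ∂μ = 1 := by
    have hMp : M ^ p = ∫⁻ x, f x ^ p ∂μ := by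
      rw [hM, ← ENNReal.rpow_mul, one_div_mul_cancel hp.ne', ENNReal.rpow_one]
    simp only [ENNReal.mul_rpow_of_nonneg _ _ hp.le]
    rw [lintegral_const_mul _ (by fun_prop), ← hMp, ENNReal.inv_rpow,
      ENNReal.inv_mul_cancel (by simp [hM0, hp.le]) (by finiteness)]
  have hbound := hC _ (hf.const_mul M⁻¹) hnormalized
  simp only [mul_assoc, lintegral_const_mul' _ _ (ENNReal.inv_ne_top.2 hM0),
    ENNReal.mul_rpow_of_nonneg _ _ hq.le] at hbound
  rw [lintegral_const_mul' _ _ (by finiteness), ENNReal.inv_rpow,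
    ENNReal.inv_mul_le_iff (by simp [hM0, hq.le]) (by finiteness)] at hbound
  calc (∫⁻ y, (∫⁻ x, f x * K x y ∂μ) ^ q ∂ν) ^ (1 / q) ≤ (M ^ q * C) ^ (1 / q) := by gcongr
    _ = C ^ (1 / q) * M := by
      rw [ENNReal.mul_rpow_of_nonneg _ _ (by positivity), ← ENNReal.rpow_mul,
        mul_one_div_cancel hq.ne', ENNReal.rpow_one, mul_comm]
    _ ≤ ((C ^ (1 / q) + 1 : ℝ≥0) : ℝ≥0∞) * M := by
      rw [ENNReal.coe_add, ENNReal.coe_rpow_of_nonneg _ (by positivity)]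
      gcongr
      exact le_self_add

theorem of_schur [SFinite μ] [SFinite ν] (hp : 1 ≤ p) (hpq : p ≤ q)
    (hm₁ : Measurable (Function.uncurry K₁)) (hm₂ : Measurable (Function.uncurry K₂))
    {C₁ C₂ : ℝ≥0} (h₁ : ∀ᵐ x ∂μ, ∫⁻ y, K₁ x y ∂ν ≤ C₁) (h₂ : ∀ᵐ y ∂ν, ∫⁻ x, K₂ x y ∂μ ≤ C₂) :
    KernelBounded (fun x y ↦ K₁ x y ^ (1 / q) * K₂ x y ^ (1 - 1 / p)) p q μ ν := by
  have hp0 : 0 < p := by linarith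
  have hq0 : 0 < q := by linarith
  have hv : 0 ≤ 1 / q := by positivity
  have hu : 0 ≤ 1 - 1 / p := sub_nonneg.2 ((div_le_one hp0).2 hp)
  have hvu : 0 ≤ 1 / p - 1 / q := sub_nonneg.2 (one_div_le_one_div_of_le hp0 hpq)
  refine ⟨C₁ ^ (1 / q) * C₂ ^ (1 - 1 / p), fun f hf ↦ ?_⟩
  set M := ∫⁻ x, f x ^ p ∂μ
  have hpointwise : ∀ᵐ y ∂ν, (∫⁻ x, f x * (K₁ x y ^ (1 / q) * K₂ x y ^ (1 - 1 / p)) ∂μ) ^ q ≤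
      (∫⁻ x, f x ^ p * K₁ x y ∂μ) * (C₂ ^ (1 - 1 / p) * M ^ (1 / p - 1 / q)) ^ q := by
    filter_upwards [h₂] with y hy
    calc (∫⁻ x, f x * (K₁ x y ^ (1 / q) * K₂ x y ^ (1 - 1 / p)) ∂μ) ^ q
        ≤ ((∫⁻ x, f x ^ p * K₁ x y ∂μ) ^ (1 / q) *
            (C₂ ^ (1 - 1 / p) * M ^ (1 / p - 1 / q))) ^ q := by
          refine ENNReal.rpow_le_rpow ((lintegral_mul_schur_le hp hpq hf hm₁.of_uncurry_right
            hm₂.of_uncurry_right).trans ?_) hq0.le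
          rw [mul_assoc]
          gcongr
      _ = _ := by
          rw [ENNReal.mul_rpow_of_nonneg _ _ hq0.le, ← ENNReal.rpow_mul,
            one_div_mul_cancel hq0.ne', ENNReal.rpow_one]
  have htonelli : ∫⁻ y, ∫⁻ x, f x ^ p * K₁ x y ∂μ ∂ν ≤ C₁ * M :=
    lintegral_lintegral_mul_kernel_le (by fun_prop) hm₁ h₁
  have hMpow : M ^ (1 / q) * M ^ (1 / p - 1 / q) = M ^ (1 / p) := by
    rw [← ENNReal.rpow_add_of_nonneg _ _ hv hvu, add_sub_cancel]
  calc _ ≤ ((C₁ * M) * (C₂ ^ (1 - 1 / p) * M ^ (1 / p - 1 / q)) ^ q) ^ (1 / q) := by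
        refine ENNReal.rpow_le_rpow ((lintegral_mono_ae hpointwise).trans ?_) hv
        rw [lintegral_mul_const _ (Measurable.lintegral_prod_left'
          (f := fun z : X × Y ↦ f z.1 ^ p * K₁ z.1 z.2) (by fun_prop))]
        gcongr
    _ = C₁ ^ (1 / q) * C₂ ^ (1 - 1 / p) * (M ^ (1 / q) * M ^ (1 / p - 1 / q)) := by
        rw [ENNReal.mul_rpow_of_nonneg _ _ hv, ENNReal.mul_rpow_of_nonneg _ _ hv,
          ← ENNReal.rpow_mul _ q, mul_one_div_cancel hq0.ne', ENNReal.rpow_one]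
        ring
    _ = _ := by
        rw [hMpow, ENNReal.coe_mul, ENNReal.coe_rpow_of_nonneg _ hv,
          ENNReal.coe_rpow_of_nonneg _ hu]

end KernelBounded

end Kernel

section HardyLittlewoodSobolev

/-- The integrand, with `a` in place of `f(x)` and `e` in place of `|x - y|`, of a substitute for
the maximal function in a Hedberg-type argument: if `‖f‖_p = 1`, its integral `I(y)` in `x` bounds
`(∫ f(x) |x - y|^(-lam) dx)^q` with `lam = N (1 - 1/p + 1/q)`, while `∫ I` is at most a constant. -/
def hedbergKernel (N p q : ℝ) (a e : ℝ≥0∞) : ℝ≥0∞ :=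
  a * min (a ^ p) (e ^ (-N)) ^ (1 - 1 / q) * e ^ (-(N * (1 - 1 / p + 1 / q)))

theorem measurable_hedbergKernel (N p q : ℝ) :
    Measurable (Function.uncurry (hedbergKernel N p q)) := by
  unfold hedbergKernel Function.uncurry
  fun_prop

theorem rpow_le_of_forall_le_add_rpow_mul {N q : ℝ} (hN : 0 < N) (hq : 0 < q) {T I : ℝ≥0∞} {C : ℝ≥0}
    (h : ∀ R : ℝ≥0∞, R ≠ 0 → R ≠ ∞ →
      T ≤ C * R ^ (-(N * (1 / q))) + R ^ (N * (1 - 1 / q)) * I) :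
    T ^ q ≤ (C + 1) ^ q * I := by
  have hC0 : ((C : ℝ≥0∞) + 1) ^ q ≠ 0 := by positivity
  have hCtop : ((C : ℝ≥0∞) + 1) ^ q ≠ ∞ := by finiteness
  rw [mul_comm, ← ENNReal.div_le_iff_le_mul (.inl hC0) (.inl hCtop)]
  refine le_of_forall_gt_imp_ge_of_dense fun J hJ ↦ ?_
  rcases eq_or_ne J ∞ with rfl | hJtop
  · exact le_top
  have hJ0 : J ≠ 0 := hJ.ne_bot
  have hR {s : ℝ} : (J ^ (-(1 / N))) ^ (N * s) = J ^ (-s) := by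
    rw [← ENNReal.rpow_mul]
    congr 1
    field_simp
  have hT : T ≤ (C + 1) * J ^ (1 / q) := calc
    T ≤ C * J ^ (1 / q) + J ^ (-(1 - 1 / q)) * J := by
      have := h (J ^ (-(1 / N))) (ENNReal.rpow_pos hJ0.bot_lt hJtop).ne' (by finiteness)
      rw [← mul_neg, hR, hR, neg_neg] at this
      exact this.trans (by gcongr)
    _ = (C + 1) * J ^ (1 / q) := by
      nth_rw 3 [← ENNReal.rpow_one J]
      rw [← ENNReal.rpow_add _ _ hJ0 hJtop, add_mul, one_mul]
      ring_nf
  rw [ENNReal.div_le_iff_le_mul (.inl hC0) (.inl hCtop)]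
  calc T ^ q ≤ ((C + 1) * J ^ (1 / q)) ^ q := by gcongr
    _ = J * (C + 1) ^ q := by
      rw [ENNReal.mul_rpow_of_nonneg _ _ hq.le, ← ENNReal.rpow_mul, one_div_mul_cancel hq.ne',
        ENNReal.rpow_one, mul_comm]

theorem mul_rpow_le_add_hedbergKernel {N p q : ℝ} (hN : 0 < N) (hp : 0 < p) (hq : 1 ≤ q)
    {a e R : ℝ≥0∞} (hR0 : R ≠ 0) (hR : R ≠ ∞) (heR : e ≤ R) :
    a * e ^ (-(N * (1 - 1 / p + 1 / q))) ≤
      R ^ (-(N * (1 / p))) * e ^ (-(N * (1 - 1 / p + 1 / q))) +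
        R ^ (N * (1 - 1 / q)) * hedbergKernel N p q a e := by
  have hv : 0 ≤ 1 - 1 / q := sub_nonneg.2 ((div_le_one (by linarith)).2 hq)
  rcases le_total (a ^ p) (R ^ (-N)) with hsmall | hlarge
  · have ha : a ≤ R ^ (-(N * (1 / p))) := by
      rwa [← neg_mul, ENNReal.rpow_mul, one_div, ENNReal.le_rpow_inv_iff hp]
    exact le_add_right (mul_le_mul_left ha _)
  · have hmin : R ^ (-N) ≤ min (a ^ p) (e ^ (-N)) :=
      le_min hlarge (ennreal_rpow_neg_le_rpow_neg hN.le heR)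
    have hone : 1 ≤ R ^ (N * (1 - 1 / q)) * min (a ^ p) (e ^ (-N)) ^ (1 - 1 / q) := calc
      1 = R ^ (N * (1 - 1 / q)) * (R ^ (-N)) ^ (1 - 1 / q) := by
        rw [← ENNReal.rpow_mul, ← ENNReal.rpow_add _ _ hR0 hR]
        ring_nf
        exact ENNReal.rpow_zero.symm
      _ ≤ _ := by gcongr
    refine le_add_left ?_
    calc a * e ^ (-(N * (1 - 1 / p + 1 / q)))
        ≤ (R ^ (N * (1 - 1 / q)) * min (a ^ p) (e ^ (-N)) ^ (1 - 1 / q)) *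
          (a * e ^ (-(N * (1 - 1 / p + 1 / q)))) := le_mul_of_one_le_left' hone
      _ = _ := by rw [hedbergKernel]; ring

variable {V : Type*} [NormedAddCommGroup V] [NormedSpace ℝ V] [FiniteDimensional ℝ V]
  [MeasurableSpace V] [BorelSpace V] (μ : Measure V) [μ.IsAddHaarMeasure] {p q : ℝ}

theorem exists_lintegral_eball_hedbergKernel_le [Nontrivial V] (hp : 1 < p) (hpq : p < q) :
    ∃ C : ℝ≥0, ∀ (x : V) (a R : ℝ≥0∞), R ≠ 0 → R ≠ ∞ →
      ∫⁻ y in Metric.eball x R, hedbergKernel (Module.finrank ℝ V) p q a ‖x - y‖ₑ ∂μ ≤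
        C * (a * (a ^ p) ^ (1 - 1 / q) * R ^ (Module.finrank ℝ V * (1 / p - 1 / q))) := by
  set N : ℝ := (Module.finrank ℝ V : ℝ)
  have hN : 0 < N := Nat.cast_pos.2 Module.finrank_pos
  have hu : 1 / p < 1 := (div_lt_one (by linarith)).2 hp
  have hvu : 1 / q < 1 / p := one_div_lt_one_div_of_lt (by linarith) hpq
  have hv : 0 ≤ 1 - 1 / q := by linarith
  obtain ⟨C, hC⟩ := exists_lintegral_eball_enorm_sub_rpow_le μ
    (s := N * (1 - 1 / p + 1 / q)) (by nlinarith)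
  refine ⟨C, fun x a R hR0 hR ↦ ?_⟩
  calc ∫⁻ y in Metric.eball x R, hedbergKernel N p q a ‖x - y‖ₑ ∂μ
      ≤ ∫⁻ y in Metric.eball x R,
          a * (a ^ p) ^ (1 - 1 / q) * ‖x - y‖ₑ ^ (-(N * (1 - 1 / p + 1 / q))) ∂μ := by
        refine lintegral_mono fun y ↦ ?_
        unfold hedbergKernel
        gcongr
        exact min_le_left _ _
    _ ≤ a * (a ^ p) ^ (1 - 1 / q) * (C * R ^ (N - N * (1 - 1 / p + 1 / q))) := by
        rw [lintegral_const_mul _ (by fun_prop)]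
        exact mul_le_mul_right (hC x R hR0 hR) _
    _ = C * (a * (a ^ p) ^ (1 - 1 / q) * R ^ (N * (1 / p - 1 / q))) := by
        rw [mul_left_comm]
        ring_nf

theorem exists_lintegral_compl_eball_hedbergKernel_le [Nontrivial V] (hp : 1 < p) (hq : 1 < q) :
    ∃ C : ℝ≥0, ∀ (x : V) (a R : ℝ≥0∞), R ≠ 0 → R ≠ ∞ →
      ∫⁻ y in (Metric.eball x R)ᶜ, hedbergKernel (Module.finrank ℝ V) p q a ‖x - y‖ₑ ∂μ ≤
        C * (a * R ^ (-(Module.finrank ℝ V * (1 - 1 / p)))) := by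
  set N : ℝ := (Module.finrank ℝ V : ℝ)
  have hN : 0 < N := Nat.cast_pos.2 Module.finrank_pos
  have hu : 1 / p < 1 := (div_lt_one (by linarith)).2 hp
  have hv : 0 ≤ 1 - 1 / q := sub_nonneg.2 ((div_le_one (by linarith)).2 hq.le)
  obtain ⟨C, hC⟩ := exists_lintegral_compl_eball_enorm_sub_rpow_le μ
    (s := N * (2 - 1 / p)) (by nlinarith)
  refine ⟨C, fun x a R hR0 hR ↦ ?_⟩
  have hpointwise (y : V) (hy : x ≠ y) : hedbergKernel N p q a ‖x - y‖ₑ ≤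
      a * ‖x - y‖ₑ ^ (-(N * (2 - 1 / p))) := calc
    _ ≤ a * (‖x - y‖ₑ ^ (-N)) ^ (1 - 1 / q) * ‖x - y‖ₑ ^ (-(N * (1 - 1 / p + 1 / q))) := by
      unfold hedbergKernel
      gcongr
      exact min_le_right _ _
    _ = a * ‖x - y‖ₑ ^ (-(N * (2 - 1 / p))) := by
      rw [mul_assoc, ← ENNReal.rpow_mul,
        ← ENNReal.rpow_add _ _ (by simpa [sub_eq_zero] using hy) (by finiteness)]
      ring_nf
  calc ∫⁻ y in (Metric.eball x R)ᶜ, hedbergKernel N p q a ‖x - y‖ₑ ∂μ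
      ≤ ∫⁻ y in (Metric.eball x R)ᶜ, a * ‖x - y‖ₑ ^ (-(N * (2 - 1 / p))) ∂μ :=
        setLIntegral_mono (by fun_prop) fun y hy ↦ hpointwise y <| by
          rintro rfl
          exact hy (Metric.mem_eball_self hR0.bot_lt)
    _ ≤ a * (C * R ^ (N - N * (2 - 1 / p))) := by
        rw [lintegral_const_mul _ (by fun_prop)]
        exact mul_le_mul_right (hC x R hR0 hR) _
    _ = C * (a * R ^ (-(N * (1 - 1 / p)))) := by
        rw [mul_left_comm]
        ring_nf

theorem exists_lintegral_hedbergKernel_le [Nontrivial V] (hp : 1 < p) (hpq : p < q) :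
    ∃ C : ℝ≥0, ∀ (x : V) (a : ℝ≥0∞), a ≠ ∞ →
      ∫⁻ y, hedbergKernel (Module.finrank ℝ V) p q a ‖x - y‖ₑ ∂μ ≤ C * a ^ p := by
  obtain ⟨Cn, hCn⟩ := exists_lintegral_eball_hedbergKernel_le μ hp hpq
  obtain ⟨Cf, hCf⟩ := exists_lintegral_compl_eball_hedbergKernel_le μ hp (hp.trans hpq)
  set N : ℝ := (Module.finrank ℝ V : ℝ)
  have hN : 0 < N := Nat.cast_pos.2 Module.finrank_pos
  refine ⟨Cn + Cf, fun x a ha ↦ ?_⟩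
  rcases eq_or_ne a 0 with rfl | ha0
  · simp [hedbergKernel]
  set R := a ^ (-(p / N)) with hRdef
  have hR0 : R ≠ 0 := (ENNReal.rpow_pos ha0.bot_lt ha).ne'
  have hR : R ≠ ∞ := by finiteness
  have hnear : a * (a ^ p) ^ (1 - 1 / q) * R ^ (N * (1 / p - 1 / q)) = a ^ p := by
    rw [hRdef, ← ENNReal.rpow_mul, ← ENNReal.rpow_mul]
    nth_rw 1 [← ENNReal.rpow_one a]
    rw [← ENNReal.rpow_add _ _ ha0 ha, ← ENNReal.rpow_add _ _ ha0 ha]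
    congr 1
    field_simp
    ring
  have hfar : a * R ^ (-(N * (1 - 1 / p))) = a ^ p := by
    rw [hRdef, ← ENNReal.rpow_mul]
    nth_rw 1 [← ENNReal.rpow_one a]
    rw [← ENNReal.rpow_add _ _ ha0 ha]
    congr 1
    field_simp
    ring
  rw [← lintegral_add_compl _ Metric.isOpen_eball.measurableSet, ENNReal.coe_add, add_mul]
  exact add_le_add ((hCn x a R hR0 hR).trans_eq (by rw [hnear]))
    ((hCf x a R hR0 hR).trans_eq (by rw [hfar]))

theorem exists_lintegral_compl_eball_mul_enorm_sub_rpow_le [Nontrivial V] (hp : 1 < p)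
    (hq : 0 < q) :
    ∃ C : ℝ≥0, ∀ f : V → ℝ≥0∞, Measurable f → ∫⁻ x, f x ^ p ∂μ = 1 →
      ∀ (y : V) (R : ℝ≥0∞), R ≠ 0 → R ≠ ∞ →
        ∫⁻ x in (Metric.eball y R)ᶜ,
            f x * ‖x - y‖ₑ ^ (-(Module.finrank ℝ V * (1 - 1 / p + 1 / q))) ∂μ ≤
          C * R ^ (-(Module.finrank ℝ V * (1 / q))) := by
  have hpp : p.HolderConjugate p.conjExponent := .conjExponent hp
  set N : ℝ := (Module.finrank ℝ V : ℝ) with hNdef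
  have hN : 0 < N := Nat.cast_pos.2 Module.finrank_pos
  have hconj : 1 - 1 / p = 1 / p.conjExponent := by
    rw [one_div, one_div, hpp.one_sub_inv]
  have hp' : 0 < p.conjExponent := hpp.symm.pos
  obtain ⟨C, hC⟩ := exists_lintegral_compl_eball_enorm_sub_rpow_le μ
    (s := N * (1 - 1 / p + 1 / q) * p.conjExponent) (by
      rw [hconj, ← hNdef, mul_assoc, add_mul, one_div_mul_cancel hp'.ne']
      exact lt_mul_of_one_lt_right hN (lt_add_of_pos_right 1 (by positivity)))
  refine ⟨C ^ (1 / p.conjExponent), fun f hf hnorm y R hR0 hR ↦ ?_⟩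
  calc _ ≤ (∫⁻ x in (Metric.eball y R)ᶜ, f x ^ p ∂μ) ^ (1 / p) *
        (∫⁻ x in (Metric.eball y R)ᶜ,
          (‖x - y‖ₑ ^ (-(N * (1 - 1 / p + 1 / q)))) ^ p.conjExponent ∂μ) ^
            (1 / p.conjExponent) :=
        ENNReal.lintegral_mul_le_Lp_mul_Lq _ hpp hf.aemeasurable (by fun_prop)
    _ ≤ 1 ^ (1 / p) * (C * R ^ (N - N * (1 - 1 / p + 1 / q) * p.conjExponent)) ^
          (1 / p.conjExponent) := by
        refine mul_le_mul' (ENNReal.rpow_le_rpow ?_ (by positivity))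
          (ENNReal.rpow_le_rpow ?_ (by positivity))
        · exact hnorm ▸ setLIntegral_le_lintegral _ _
        · simpa only [← ENNReal.rpow_mul, neg_mul, enorm_sub_rev y] using hC y R hR0 hR
    _ = _ := by
        rw [ENNReal.one_rpow, one_mul, ENNReal.mul_rpow_of_nonneg _ _ (by positivity),
          ← ENNReal.rpow_mul, ENNReal.coe_rpow_of_nonneg _ (by positivity), hconj]
        congr 2
        field_simp
        ring

theorem exists_lintegral_eball_mul_enorm_sub_rpow_le [Nontrivial V] (hp : 1 < p) (hpq : p < q) :
    ∃ C : ℝ≥0, ∀ (f : V → ℝ≥0∞) (y : V) (R : ℝ≥0∞), R ≠ 0 → R ≠ ∞ →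
      ∫⁻ x in Metric.eball y R,
          f x * ‖x - y‖ₑ ^ (-(Module.finrank ℝ V * (1 - 1 / p + 1 / q))) ∂μ ≤
        C * R ^ (-(Module.finrank ℝ V * (1 / q))) + R ^ (Module.finrank ℝ V * (1 - 1 / q)) *
          ∫⁻ x, hedbergKernel (Module.finrank ℝ V) p q (f x) ‖x - y‖ₑ ∂μ := by
  set N : ℝ := (Module.finrank ℝ V : ℝ)
  have hN : 0 < N := Nat.cast_pos.2 Module.finrank_pos
  have hvu : 1 / q < 1 / p := one_div_lt_one_div_of_lt (by linarith) hpq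
  obtain ⟨C, hC⟩ := exists_lintegral_eball_enorm_sub_rpow_le μ
    (s := N * (1 - 1 / p + 1 / q)) (by nlinarith)
  refine ⟨C, fun f y R hR0 hR ↦ ?_⟩
  calc ∫⁻ x in Metric.eball y R, f x * ‖x - y‖ₑ ^ (-(N * (1 - 1 / p + 1 / q))) ∂μ
      ≤ ∫⁻ x in Metric.eball y R, (R ^ (-(N * (1 / p))) *
          ‖x - y‖ₑ ^ (-(N * (1 - 1 / p + 1 / q))) +
            R ^ (N * (1 - 1 / q)) * hedbergKernel N p q (f x) ‖x - y‖ₑ) ∂μ := by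
        refine setLIntegral_mono' Metric.isOpen_eball.measurableSet fun x hx ↦ ?_
        rw [Metric.mem_eball, edist_eq_enorm_sub] at hx
        exact mul_rpow_le_add_hedbergKernel hN (by linarith) (by linarith) hR0 hR hx.le
    _ ≤ R ^ (-(N * (1 / p))) * (C * R ^ (N - N * (1 - 1 / p + 1 / q))) +
          R ^ (N * (1 - 1 / q)) * ∫⁻ x, hedbergKernel N p q (f x) ‖x - y‖ₑ ∂μ := by
        rw [lintegral_add_left (by fun_prop), lintegral_const_mul _ (by fun_prop),
          lintegral_const_mul' _ _ (by finiteness)]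
        gcongr
        · simpa only [enorm_sub_rev y] using hC y R hR0 hR
        · exact Measure.restrict_le_self
    _ = _ := by
        rw [mul_left_comm, ← ENNReal.rpow_add _ _ hR0 hR]
        ring_nf

theorem exists_lintegral_lintegral_hedbergKernel_le [Nontrivial V] (hp : 1 < p) (hpq : p < q) :
    ∃ C : ℝ≥0, ∀ f : V → ℝ≥0∞, Measurable f → ∫⁻ x, f x ^ p ∂μ ≠ ∞ →
      ∫⁻ y, ∫⁻ x, hedbergKernel (Module.finrank ℝ V) p q (f x) ‖x - y‖ₑ ∂μ ∂μ ≤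
        C * ∫⁻ x, f x ^ p ∂μ := by
  obtain ⟨C, hC⟩ := exists_lintegral_hedbergKernel_le μ hp hpq
  refine ⟨C, fun f hf hnorm ↦ ?_⟩
  have hmeas : Measurable (Function.uncurry
      fun y x : V ↦ hedbergKernel (Module.finrank ℝ V) p q (f x) ‖x - y‖ₑ) :=
    (measurable_hedbergKernel _ p q).comp
      (f := fun z : V × V ↦ (f z.2, ‖z.2 - z.1‖ₑ)) (by fun_prop)
  rw [lintegral_lintegral_swap hmeas.aemeasurable, ← lintegral_const_mul _ (by fun_prop)]
  refine lintegral_mono_ae ?_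
  filter_upwards [ae_lt_top (by fun_prop) hnorm] with x hx
  exact hC x (f x) ((ENNReal.rpow_lt_top_iff_of_pos (by linarith)).1 hx).ne

theorem kernelBounded_enorm_sub_rpow [Nontrivial V] (hp : 1 < p) (hpq : p < q) :
    KernelBounded (fun x y : V ↦ ‖x - y‖ₑ ^ (-(Module.finrank ℝ V * (1 - 1 / p + 1 / q))))
      p q μ μ := by
  have hq : 0 < q := by linarith
  obtain ⟨Cf, hCf⟩ := exists_lintegral_compl_eball_mul_enorm_sub_rpow_le μ hp hq
  obtain ⟨Cn, hCn⟩ := exists_lintegral_eball_mul_enorm_sub_rpow_le μ hp hpq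
  obtain ⟨Ch, hCh⟩ := exists_lintegral_lintegral_hedbergKernel_le μ hp hpq
  set N : ℝ := (Module.finrank ℝ V : ℝ)
  have hN : 0 < N := Nat.cast_pos.2 Module.finrank_pos
  refine .of_normalized (by linarith) hq ⟨(Cn + Cf + 1) ^ q * Ch, fun f hf hnorm ↦ ?_⟩
  have hpointwise (y : V) : (∫⁻ x, f x * ‖x - y‖ₑ ^ (-(N * (1 - 1 / p + 1 / q))) ∂μ) ^ q ≤
      ((Cn + Cf : ℝ≥0) + 1) ^ q * ∫⁻ x, hedbergKernel N p q (f x) ‖x - y‖ₑ ∂μ := by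
    refine rpow_le_of_forall_le_add_rpow_mul hN hq fun R hR0 hR ↦ ?_
    rw [← lintegral_add_compl _ (Metric.isOpen_eball (x := y) (ε := R)).measurableSet,
      ENNReal.coe_add, add_mul, add_right_comm]
    exact add_le_add (hCn f y R hR0 hR) (hCf f hf hnorm y R hR0 hR)
  calc ∫⁻ y, (∫⁻ x, f x * ‖x - y‖ₑ ^ (-(N * (1 - 1 / p + 1 / q))) ∂μ) ^ q ∂μ
      ≤ ((Cn + Cf : ℝ≥0) + 1) ^ q *
          ∫⁻ y, ∫⁻ x, hedbergKernel N p q (f x) ‖x - y‖ₑ ∂μ ∂μ := by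
        rw [← lintegral_const_mul' _ _ (by finiteness)]
        exact lintegral_mono hpointwise
    _ ≤ ((Cn + Cf : ℝ≥0) + 1) ^ q * (Ch * ∫⁻ x, f x ^ p ∂μ) :=
        mul_le_mul_right (hCh f hf (hnorm.trans_ne one_ne_top)) _
    _ = (((Cn + Cf + 1) ^ q * Ch : ℝ≥0) : ℝ≥0∞) := by
        rw [hnorm, mul_one, ENNReal.coe_mul, ENNReal.coe_rpow_of_nonneg _ hq.le]
        push_cast
        rfl

end HardyLittlewoodSobolev

section HalfSpace

/-- Lebesgue measure on the upper half space of `E × ℝ`, with `μ` in the horizontal directions. -/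
abbrev halfSpaceMeasure {E : Type*} [MeasurableSpace E] (μ : Measure E) : Measure (E × ℝ) :=
  μ.prod (volume.restrict (Set.Ioi 0))

theorem ae_snd_pos {E : Type*} [MeasurableSpace E] (μ : Measure E) :
    ∀ᵐ X ∂halfSpaceMeasure μ, 0 < X.2 :=
  Measure.quasiMeasurePreserving_snd.ae (ae_restrict_mem measurableSet_Ioi)

variable {E : Type*} [NormedAddCommGroup E]

/-- The kernel `t^(-α) z^(-β) |X - Y|^(-lam)` for `X = (x, t)` and `Y = (y, z)`, which absorbs both
weights of the Stein–Weiss inequality. The distance is the one of the sup norm on `E × ℝ`. -/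
def weightedKernel (α β lam : ℝ) (X Y : E × ℝ) : ℝ≥0∞ :=
  ENNReal.ofReal X.2 ^ (-α) * ENNReal.ofReal Y.2 ^ (-β) * ‖X - Y‖ₑ ^ (-lam)

theorem weightedKernel_swap (α β lam : ℝ) (X Y : E × ℝ) :
    weightedKernel α β lam X Y = weightedKernel β α lam Y X := by
  rw [weightedKernel, weightedKernel, enorm_sub_rev, mul_comm (_ ^ (-α))]

theorem weightedKernel_eq_rpow_mul_rpow {α α₁ α₂ β β₁ β₂ lam lam' a b : ℝ} (ha : 0 ≤ a)
    (hb : 0 ≤ b) (hα : α = α₁ * a + α₂ * b) (hβ : β = β₁ * a + β₂ * b)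
    (hlam : lam = lam' * (a + b)) {X Y : E × ℝ} (hX : 0 < X.2) (hY : 0 < Y.2) :
    weightedKernel α β lam X Y =
      weightedKernel α₁ β₁ lam' X Y ^ a * weightedKernel α₂ β₂ lam' X Y ^ b := by
  have hweight {t : ℝ} (ht : 0 < t) (γ₁ γ₂ : ℝ) : ENNReal.ofReal t ^ (-(γ₁ * a + γ₂ * b)) =
      (ENNReal.ofReal t ^ (-γ₁)) ^ a * (ENNReal.ofReal t ^ (-γ₂)) ^ b := by
    rw [← ENNReal.rpow_mul, ← ENNReal.rpow_mul, ← ENNReal.rpow_add _ _ (by simpa) (by finiteness)]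
    ring_nf
  have hdist : ‖X - Y‖ₑ ^ (-(lam' * (a + b))) =
      (‖X - Y‖ₑ ^ (-lam')) ^ a * (‖X - Y‖ₑ ^ (-lam')) ^ b := by
    rw [← ENNReal.rpow_add_of_nonneg _ _ ha hb, ← ENNReal.rpow_mul, neg_mul]
  simp only [weightedKernel, hα, hβ, hlam, hweight hX, hweight hY, hdist,
    ENNReal.mul_rpow_of_nonneg _ _ ha, ENNReal.mul_rpow_of_nonneg _ _ hb]
  ring

theorem rpow_neg_mul_rpow_le_two_rpow {a b : ℝ≥0∞} {s : ℝ} (hs : 0 ≤ s) (hab : b ≤ 2 * a) :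
    a ^ (-s) * b ^ s ≤ 2 ^ s := by
  calc a ^ (-s) * b ^ s ≤ a ^ (-s) * (2 ^ s * a ^ s) := by
        rw [← ENNReal.mul_rpow_of_nonneg _ _ hs]
        gcongr
    _ = 2 ^ s * ((a ^ s)⁻¹ * a ^ s) := by rw [ENNReal.rpow_neg]; ring
    _ ≤ 2 ^ s := mul_le_of_le_one_right' (ENNReal.inv_mul_le_one _)

theorem rpow_neg_mul_rpow_le_two_rpow_abs {a b : ℝ≥0∞} (hab : b ≤ 2 * a) (hba : a ≤ 2 * b)
    (s : ℝ) : a ^ (-s) * b ^ s ≤ 2 ^ |s| := by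
  rcases le_total 0 s with hs | hs
  · rw [abs_of_nonneg hs]
    exact rpow_neg_mul_rpow_le_two_rpow hs hab
  · rw [abs_of_nonpos hs, mul_comm]
    simpa only [neg_neg] using rpow_neg_mul_rpow_le_two_rpow (neg_nonneg.2 hs) hba

theorem weightedKernel_neg_le {α lam ε : ℝ} (hε : 0 ≤ ε) {X Y : E × ℝ} (hY : 0 < Y.2) :
    weightedKernel α (-α) lam X Y ≤
      2 ^ |α| * ‖X - Y‖ₑ ^ (-lam) + 2 ^ ε * weightedKernel α (ε - α) (lam - ε) X Y := by
  have hsnd : |X.2 - Y.2| ≤ ‖X - Y‖ := norm_snd_le (X - Y)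
  rcases lt_or_ge (2 * ‖X - Y‖) Y.2 with hnear | hfar
  · rw [abs_le] at hsnd
    refine le_add_right (mul_le_mul_left ?_ _)
    rw [neg_neg]
    have hle {s t : ℝ} (hst : s ≤ 2 * t) : ENNReal.ofReal s ≤ 2 * ENNReal.ofReal t := by
      simpa [ENNReal.ofReal_mul] using ENNReal.ofReal_le_ofReal hst
    exact rpow_neg_mul_rpow_le_two_rpow_abs (hle (by linarith)) (hle (by linarith)) α
  · refine le_add_left ?_
    have hfar' : ENNReal.ofReal Y.2 ≤ 2 * ‖X - Y‖ₑ := by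
      simpa [ENNReal.ofReal_mul] using ENNReal.ofReal_le_ofReal hfar
    have hXY : ‖X - Y‖ₑ ≠ 0 := by
      intro h0
      simp [h0, hY.not_ge] at hfar'
    have hz : ENNReal.ofReal Y.2 ^ (-(-α)) =
        ENNReal.ofReal Y.2 ^ (-(ε - α)) * ENNReal.ofReal Y.2 ^ ε := by
      rw [← ENNReal.rpow_add _ _ (by simpa) (by finiteness)]
      ring_nf
    have hd : ‖X - Y‖ₑ ^ (-(lam - ε)) = ‖X - Y‖ₑ ^ (-lam) * ‖X - Y‖ₑ ^ ε := by
      rw [← ENNReal.rpow_add _ _ hXY (by finiteness)]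
      ring_nf
    simp only [weightedKernel, hz, hd]
    calc _ ≤ ENNReal.ofReal X.2 ^ (-α) * (ENNReal.ofReal Y.2 ^ (-(ε - α)) * (2 * ‖X - Y‖ₑ) ^ ε) *
          ‖X - Y‖ₑ ^ (-lam) := by gcongr
      _ = _ := by rw [ENNReal.mul_rpow_of_nonneg _ _ hε]; ring

variable [NormedSpace ℝ E] [FiniteDimensional ℝ E] [MeasurableSpace E] [BorelSpace E]

theorem measurable_weightedKernel (α β lam : ℝ) :
    Measurable (Function.uncurry (weightedKernel α β lam : E × ℝ → E × ℝ → ℝ≥0∞)) := by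
  unfold weightedKernel Function.uncurry
  fun_prop

variable (μ : Measure E) [μ.IsAddHaarMeasure]

theorem exists_lintegral_enorm_sub_rpow_slice_le {s : ℝ} (hs : Module.finrank ℝ E < s) :
    ∃ C : ℝ≥0, ∀ (X : E × ℝ) (z : ℝ), X.2 ≠ z →
      ∫⁻ y, ‖X - (y, z)‖ₑ ^ (-s) ∂μ ≤ C * ‖X.2 - z‖ₑ ^ (Module.finrank ℝ E - s) := by
  obtain ⟨C, hC⟩ := exists_lintegral_max_enorm_sub_rpow_le μ hs
  exact ⟨C, fun X z hz ↦ hC X.1 ‖X.2 - z‖ₑ (enorm_ne_zero.2 (sub_ne_zero.2 hz)) enorm_ne_top⟩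

theorem exists_lintegral_Ioi_rpow_mul_enorm_sub_rpow_le {a b : ℝ} (ha : a < 1) (hb : b < 1)
    (hab : 1 < a + b) :
    ∃ C : ℝ≥0, ∀ t : ℝ, 0 < t →
      ∫⁻ z in Set.Ioi (0 : ℝ), ENNReal.ofReal z ^ (-b) * ‖t - z‖ₑ ^ (-a) ≤
        C * ENNReal.ofReal t ^ (1 - (a + b)) := by
  obtain ⟨C, hC⟩ := exists_lintegral_enorm_sub_rpow_mul_enorm_sub_rpow_le (volume : Measure ℝ)
    (a := a) (b := b) (by simpa) (by simpa) (by simpa)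
  refine ⟨C, fun t ht ↦ ?_⟩
  calc ∫⁻ z in Set.Ioi (0 : ℝ), ENNReal.ofReal z ^ (-b) * ‖t - z‖ₑ ^ (-a)
      = ∫⁻ z in Set.Ioi (0 : ℝ), ‖t - z‖ₑ ^ (-a) * ‖0 - z‖ₑ ^ (-b) := by
        refine setLIntegral_congr_fun measurableSet_Ioi fun z (hz : 0 < z) ↦ ?_
        rw [zero_sub, enorm_neg, Real.enorm_of_nonneg hz.le, mul_comm]
    _ ≤ ∫⁻ z, ‖t - z‖ₑ ^ (-a) * ‖0 - z‖ₑ ^ (-b) := setLIntegral_le_lintegral _ _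
    _ ≤ C * ENNReal.ofReal t ^ (1 - (a + b)) := by
        simpa [Real.enorm_of_nonneg ht.le] using hC t 0 ht.ne'

theorem exists_lintegral_weightedKernel_le {A B s : ℝ} (hA : A < 0) (hB : B < 1)
    (hAB : 0 < A + B) (hs : A + B + s = Module.finrank ℝ E + 1) :
    ∃ C : ℝ≥0, ∀ X : E × ℝ, 0 < X.2 →
      ∫⁻ Y, weightedKernel A B s X Y ∂halfSpaceMeasure μ ≤ C := by
  set N : ℝ := (Module.finrank ℝ E : ℝ)
  obtain ⟨C₁, hC₁⟩ := exists_lintegral_enorm_sub_rpow_slice_le μ (s := s) (by linarith)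
  obtain ⟨C₂, hC₂⟩ := exists_lintegral_Ioi_rpow_mul_enorm_sub_rpow_le (a := s - N) (b := B)
    (by linarith) hB (by linarith)
  refine ⟨C₁ * C₂, fun X hX ↦ ?_⟩
  have hslice : ∀ᵐ z ∂volume.restrict (Set.Ioi (0 : ℝ)), ∫⁻ y, weightedKernel A B s X (y, z) ∂μ ≤
      ENNReal.ofReal X.2 ^ (-A) * C₁ * (ENNReal.ofReal z ^ (-B) * ‖X.2 - z‖ₑ ^ (-(s - N))) := by
    filter_upwards [ae_restrict_of_ae (Measure.ae_ne volume X.2)] with z hz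
    simp only [weightedKernel]
    rw [lintegral_const_mul _ (by fun_prop), neg_sub]
    calc _ ≤ ENNReal.ofReal X.2 ^ (-A) * ENNReal.ofReal z ^ (-B) *
          (C₁ * ‖X.2 - z‖ₑ ^ (N - s)) := by gcongr; exact hC₁ X z hz.symm
      _ = _ := by ring
  calc ∫⁻ Y, weightedKernel A B s X Y ∂halfSpaceMeasure μ
      = ∫⁻ z in Set.Ioi (0 : ℝ), ∫⁻ y, weightedKernel A B s X (y, z) ∂μ :=
        lintegral_prod_symm' _ (measurable_weightedKernel A B s).of_uncurry_left
    _ ≤ ∫⁻ z in Set.Ioi (0 : ℝ), ENNReal.ofReal X.2 ^ (-A) * C₁ *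
          (ENNReal.ofReal z ^ (-B) * ‖X.2 - z‖ₑ ^ (-(s - N))) := lintegral_mono_ae hslice
    _ ≤ ENNReal.ofReal X.2 ^ (-A) * C₁ * (C₂ * ENNReal.ofReal X.2 ^ A) := by
        rw [lintegral_const_mul _ (by fun_prop)]
        gcongr
        simpa only [show 1 - (s - N + B) = A by linarith] using hC₂ X.2 hX
    _ = C₁ * C₂ * (ENNReal.ofReal X.2 ^ (-A) * ENNReal.ofReal X.2 ^ A) := by ring
    _ = ↑(C₁ * C₂) := by
        rw [← ENNReal.rpow_add _ _ (by simpa) (by finiteness), neg_add_cancel, ENNReal.rpow_zero,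
          mul_one, ENNReal.coe_mul]

theorem kernelBounded_weightedKernel_of_pos {p q α β lam : ℝ} (hp : 1 < p) (hpq : p ≤ q)
    (hα : α < 1 - 1 / p) (hβ : β < 1 / q) (hαβ : 0 < α + β)
    (hbal : α + β + lam = (Module.finrank ℝ E + 1) * (1 - 1 / p + 1 / q)) :
    KernelBounded (weightedKernel α β lam) p q (halfSpaceMeasure μ)
      (halfSpaceMeasure μ) := by
  have hq : 0 < q := by linarith
  have hv : 0 < 1 / q := by positivity
  have hu : 0 < 1 - 1 / p := by rw [sub_pos, div_lt_one (by linarith)]; exact hp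
  set u := 1 - 1 / p
  set v := 1 / q
  have hρ : 0 < u + v := by positivity
  have hpos := ae_snd_pos μ
  obtain ⟨C₁, hC₁⟩ := exists_lintegral_weightedKernel_le μ (A := (α - u) / (u + v))
    (B := (β + u) / (u + v)) (s := lam / (u + v)) (div_neg_of_neg_of_pos (by linarith) hρ)
    (by rw [div_lt_one hρ]; linarith) (by rw [← add_div]; apply div_pos <;> linarith)
    (by rw [← add_div, ← add_div, div_eq_iff hρ.ne']; linarith)
  obtain ⟨C₂, hC₂⟩ := exists_lintegral_weightedKernel_le μ (A := (β - v) / (u + v))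
    (B := (α + v) / (u + v)) (s := lam / (u + v)) (div_neg_of_neg_of_pos (by linarith) hρ)
    (by rw [div_lt_one hρ]; linarith) (by rw [← add_div]; apply div_pos <;> linarith)
    (by rw [← add_div, ← add_div, div_eq_iff hρ.ne']; linarith)
  refine (KernelBounded.of_schur (C₂ := C₂) hp.le hpq
    (measurable_weightedKernel ((α - u) / (u + v)) ((β + u) / (u + v)) (lam / (u + v)))
    (measurable_weightedKernel ((α + v) / (u + v)) ((β - v) / (u + v)) (lam / (u + v)))
    (hpos.mono hC₁) (hpos.mono fun Y hY ↦ ?_)).mono hq.le ?_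
  · simpa only [weightedKernel_swap] using hC₂ Y hY
  · filter_upwards [hpos] with Y hY
    filter_upwards [hpos] with X hX
    exact (weightedKernel_eq_rpow_mul_rpow hv.le hu.le (by field_simp; ring) (by field_simp; ring)
      (by field_simp; ring) hX hY).le

theorem kernelBounded_halfSpaceMeasure_enorm_sub_rpow {p q : ℝ} (hp : 1 < p) (hpq : p < q) :
    KernelBounded (fun X Y ↦ ‖X - Y‖ₑ ^ (-((Module.finrank ℝ E + 1) * (1 - 1 / p + 1 / q)))) p q
      (halfSpaceMeasure μ) (halfSpaceMeasure μ) := by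
  have hfull := kernelBounded_enorm_sub_rpow (μ.prod (volume : Measure ℝ)) hp hpq
  simp only [Module.finrank_prod, Module.finrank_self, Nat.cast_add, Nat.cast_one] at hfull
  have hhalf : halfSpaceMeasure μ = (μ.prod volume).restrict (Set.univ ×ˢ Set.Ioi 0) := by
    rw [← Measure.prod_restrict, Measure.restrict_univ]
  rw [hhalf]
  exact hfull.restrict (by linarith) (by linarith) (MeasurableSet.univ.prod measurableSet_Ioi) _

theorem kernelBounded_weightedKernel_neg {p q α lam : ℝ} (hlam : lam < Module.finrank ℝ E + 1)
    (hp : 1 < p) (hpq : p ≤ q) (hα : α < 1 - 1 / p) (hβ : -α < 1 / q)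
    (hbal : lam = (Module.finrank ℝ E + 1) * (1 - 1 / p + 1 / q)) :
    KernelBounded (weightedKernel α (-α) lam) p q (halfSpaceMeasure μ)
      (halfSpaceMeasure μ) := by
  have hq : 0 < q := by linarith
  have hpq' : p < q := by
    refine hpq.lt_of_ne ?_
    rintro rfl
    linarith
  obtain ⟨ε, hε, hεβ⟩ := exists_between (show 0 < 1 / q + α by linarith)
  have hHLS := kernelBounded_halfSpaceMeasure_enorm_sub_rpow μ hp hpq'
  rw [← hbal] at hHLS
  have hpert : KernelBounded (weightedKernel α (ε - α) (lam - ε) : E × ℝ → E × ℝ → ℝ≥0∞) p q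
      (halfSpaceMeasure μ) (halfSpaceMeasure μ) :=
    kernelBounded_weightedKernel_of_pos μ hp hpq hα (by linarith) (by linarith) (by linarith)
  refine ((hHLS.const_mul hq (c := 2 ^ |α|) (by finiteness)).add
    (hpert.const_mul hq (c := 2 ^ ε) (by finiteness)) ?_ ?_ (by linarith)).mono hq.le ?_
  · unfold Function.uncurry
    fun_prop
  · exact (measurable_weightedKernel α (ε - α) (lam - ε)).const_mul _
  · filter_upwards [ae_snd_pos μ] with Y hY
    exact .of_forall fun X ↦ weightedKernel_neg_le hε.le hY

theorem kernelBounded_weightedKernel {p q α β lam : ℝ} (hlam : lam < Module.finrank ℝ E + 1)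
    (hp : 1 < p) (hpq : p ≤ q) (hα : α < 1 - 1 / p) (hβ : β < 1 / q) (hαβ : 0 ≤ α + β)
    (hbal : α + β + lam = (Module.finrank ℝ E + 1) * (1 - 1 / p + 1 / q)) :
    KernelBounded (weightedKernel α β lam) p q (halfSpaceMeasure μ)
      (halfSpaceMeasure μ) := by
  rcases hαβ.eq_or_lt' with hzero | hpos
  · obtain rfl : β = -α := by linarith
    exact kernelBounded_weightedKernel_neg μ hlam hp hpq hα hβ (by linarith)
  · exact kernelBounded_weightedKernel_of_pos μ hp hpq hα hβ hpos hbal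

end HalfSpace

section SteinWeiss

theorem enorm_sub_le_edist_toLp {E : Type*} [NormedAddCommGroup E] (X Y : E × ℝ) :
    ‖X - Y‖ₑ ≤ edist (WithLp.toLp 2 X) (WithLp.toLp 2 Y) := by
  rw [← edist_eq_enorm_sub]
  simpa using WithLp.prod_antilipschitzWith_toLp 2 E ℝ X Y

theorem ofReal_rpow_mul_rpow {t : ℝ} (ht : 0 < t) {r : ℝ} (hr : 0 ≤ r) (s : ℝ) (b : ℝ≥0∞) :
    ENNReal.ofReal (t ^ (s * r)) * b ^ r = (ENNReal.ofReal t ^ s * b) ^ r := by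
  rw [ENNReal.mul_rpow_of_nonneg _ _ hr, ← ENNReal.rpow_mul, ENNReal.ofReal_rpow_of_pos ht]

variable {E : Type*} [NormedAddCommGroup E] [NormedSpace ℝ E] [FiniteDimensional ℝ E]
  [MeasurableSpace E] [BorelSpace E] (μ : Measure E)

theorem lintegral_mul_weightedKernel {f : E × ℝ → ℝ≥0∞} (hf : Measurable f) (α β lam : ℝ)
    (Y : E × ℝ) :
    ∫⁻ X, ENNReal.ofReal X.2 ^ α * f X * weightedKernel α β lam X Y ∂halfSpaceMeasure μ =
      ENNReal.ofReal Y.2 ^ (-β) * ∫⁻ X, f X * ‖X - Y‖ₑ ^ (-lam) ∂halfSpaceMeasure μ := by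
  rw [← lintegral_const_mul _ (by fun_prop)]
  refine lintegral_congr_ae ?_
  filter_upwards [ae_snd_pos μ] with X hX
  have hcancel : ENNReal.ofReal X.2 ^ α * ENNReal.ofReal X.2 ^ (-α) = 1 := by
    rw [← ENNReal.rpow_add _ _ (by simpa) (by finiteness), add_neg_cancel, ENNReal.rpow_zero]
  calc _ = ENNReal.ofReal X.2 ^ α * ENNReal.ofReal X.2 ^ (-α) *
        (ENNReal.ofReal Y.2 ^ (-β) * (f X * ‖X - Y‖ₑ ^ (-lam))) := by
        rw [weightedKernel]
        ring
    _ = _ := by rw [hcancel, one_mul]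

variable [μ.IsAddHaarMeasure]

theorem exists_lintegral_rpow_enorm_sub_le {lam p q α β : ℝ} (hlam : lam < Module.finrank ℝ E + 1)
    (hp : 1 < p) (hpq : p ≤ q) (hα : α < 1 - 1 / p) (hβ : β < 1 / q) (hαβ : 0 ≤ α + β)
    (hbal : α + β + lam = (Module.finrank ℝ E + 1) * (1 - 1 / p + 1 / q)) :
    ∃ C : ℝ≥0, ∀ f : E × ℝ → ℝ≥0∞, Measurable f →
      (∫⁻ Y, ENNReal.ofReal (Y.2 ^ (-(β * q))) *
        (∫⁻ X, f X * ‖X - Y‖ₑ ^ (-lam) ∂halfSpaceMeasure μ) ^ q ∂halfSpaceMeasure μ) ^ (1 / q) ≤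
      C * (∫⁻ X, ENNReal.ofReal (X.2 ^ (α * p)) * f X ^ p ∂halfSpaceMeasure μ) ^ (1 / p) := by
  obtain ⟨C, hC⟩ := kernelBounded_weightedKernel μ hlam hp hpq hα hβ hαβ hbal
  refine ⟨C, fun f hf ↦ ?_⟩
  have hleft : ∫⁻ Y, ENNReal.ofReal (Y.2 ^ (-(β * q))) *
        (∫⁻ X, f X * ‖X - Y‖ₑ ^ (-lam) ∂halfSpaceMeasure μ) ^ q ∂halfSpaceMeasure μ =
      ∫⁻ Y, (∫⁻ X, ENNReal.ofReal X.2 ^ α * f X * weightedKernel α β lam X Y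
        ∂halfSpaceMeasure μ) ^ q ∂halfSpaceMeasure μ := by
    refine lintegral_congr_ae ((ae_snd_pos μ).mono fun Y hY ↦ ?_)
    simp only [lintegral_mul_weightedKernel μ hf, ← neg_mul]
    exact ofReal_rpow_mul_rpow hY (by linarith) _ _
  have hright : ∫⁻ X, ENNReal.ofReal (X.2 ^ (α * p)) * f X ^ p ∂halfSpaceMeasure μ =
      ∫⁻ X, (ENNReal.ofReal X.2 ^ α * f X) ^ p ∂halfSpaceMeasure μ :=
    lintegral_congr_ae ((ae_snd_pos μ).mono fun X hX ↦ ofReal_rpow_mul_rpow hX (by linarith) _ _)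
  rw [hleft, hright]
  exact hC _ (by fun_prop)

theorem steinWeiss_upper_half_space_dual_general {lam p q α β : ℝ}
    (hlam : lam < Module.finrank ℝ E + 1) (hp : 1 < p) (hpq : p ≤ q)
    (hα : α < 1 - 1 / p) (hβ : β < 1 / q) (hαβ : 0 ≤ α + β)
    (hbal : 1 / q = 1 / p -
      (Module.finrank ℝ E + 1 - (α + β + lam)) / (Module.finrank ℝ E + 1)) :
    ∃ C : ℝ, 0 < C ∧ ∀ f : E × ℝ → ℝ≥0∞, Measurable f →
      (∫⁻ Y, ENNReal.ofReal (Y.2 ^ (-(β * q))) *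
        (∫⁻ X, f X * edist (WithLp.toLp 2 X) (WithLp.toLp 2 Y) ^ (-lam) ∂halfSpaceMeasure μ) ^ q
          ∂halfSpaceMeasure μ) ^ (1 / q) ≤
      ENNReal.ofReal C *
        (∫⁻ X, ENNReal.ofReal (X.2 ^ (α * p)) * f X ^ p ∂halfSpaceMeasure μ) ^ (1 / p) := by
  have hsum : α + β + lam = (Module.finrank ℝ E + 1) * (1 - 1 / p + 1 / q) := by
    rw [hbal]
    field_simp
    ring
  have hlam0 : 0 ≤ lam := by
    have hu : 1 / p < 1 := by rw [div_lt_one (by linarith)]; exact hp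
    have hv : 0 < 1 / q := one_div_pos.2 (by linarith)
    have hρ : 0 ≤ 1 - 1 / p + 1 / q := by linarith only [hu, hv]
    have hprod := mul_nonneg (Nat.cast_nonneg (α := ℝ) (Module.finrank ℝ E)) hρ
    linarith only [hsum, hprod, hα, hβ]
  obtain ⟨C, hC⟩ := exists_lintegral_rpow_enorm_sub_le μ hlam hp hpq hα hβ hαβ hsum
  refine ⟨C + 1, by positivity, fun f hf ↦ le_trans ?_ ((hC f hf).trans ?_)⟩
  · have hop (Y : E × ℝ) :
        ∫⁻ X, f X * edist (WithLp.toLp 2 X) (WithLp.toLp 2 Y) ^ (-lam) ∂halfSpaceMeasure μ ≤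
          ∫⁻ X, f X * ‖X - Y‖ₑ ^ (-lam) ∂halfSpaceMeasure μ := lintegral_mono fun X ↦
      mul_le_mul_right (ennreal_rpow_neg_le_rpow_neg hlam0 (enorm_sub_le_edist_toLp X Y)) _
    have hq : 0 ≤ q := by linarith
    gcongr (∫⁻ Y, _ * ?_ ^ q ∂_) ^ (1 / q) with Y
    exact hop Y
  · gcongr
    rw [← ENNReal.ofReal_coe_nnreal]
    exact ENNReal.ofReal_le_ofReal (by linarith)

theorem ofReal_hsDist {n : ℕ} (X Y : EuclideanSpace ℝ (Fin n) × ℝ) :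
    ENNReal.ofReal (hsDist X Y) = edist (WithLp.toLp 2 X) (WithLp.toLp 2 Y) := by
  rw [edist_dist, WithLp.prod_dist_eq_of_L2, dist_eq_norm, Real.dist_eq, sq_abs]
  rfl

theorem volume_restrict_upperHalf (n : ℕ) :
    volume.restrict (upperHalf n) = halfSpaceMeasure volume := by
  have hprod : upperHalf n = Set.univ ×ˢ Set.Ioi 0 := by
    ext
    simp [upperHalf]
  rw [hprod, Measure.volume_eq_prod, ← Measure.prod_restrict, Measure.restrict_univ]

end SteinWeiss

/-- Dual form of the Stein–Weiss type inequality on the upper half space. -/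
theorem steinWeiss_upper_half_space_dual
    (n : ℕ) (hn : 1 ≤ n) (lam p q α β : ℝ)
    (hlam0 : 0 < lam) (hlam1 : lam < (n : ℝ) + 1)
    (hp1 : 1 < p) (hpq : p ≤ q)
    (hα : α < 1 - 1 / p) (hβ : β < 1 / q) (hαβ : 0 ≤ α + β)
    (hbal : 1 / q = 1 / p - ((n : ℝ) + 1 - (α + β + lam)) / ((n : ℝ) + 1)) :
    ∃ C : ℝ, 0 < C ∧
      ∀ f : EuclideanSpace ℝ (Fin n) × ℝ → ℝ,
        Measurable f → (∀ X, 0 ≤ f X) →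
        (∫⁻ Y in upperHalf n,
            ENNReal.ofReal (Y.2 ^ (-(β * q))) * Elam n lam f Y ^ q) ^ (1 / q)
          ≤ ENNReal.ofReal C *
            (∫⁻ X in upperHalf n,
              ENNReal.ofReal (X.2 ^ (α * p)) * ENNReal.ofReal (f X) ^ p) ^ (1 / p) := by
  obtain ⟨C, hC, hbound⟩ := steinWeiss_upper_half_space_dual_general
    (volume : Measure (EuclideanSpace ℝ (Fin n))) (by simpa) hp1 hpq hα hβ hαβ (by simpa using hbal)
  refine ⟨C, hC, fun f hf _ ↦ ?_⟩
  simpa only [Elam, volume_restrict_upperHalf, ofReal_hsDist] using hbound _ hf.ennreal_ofReal
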